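/- Second-difference estimate for the Lie splitting (inequality (4.9) in the proof of Theorem 4.4): Assume the weak CFL condition 7 c_inv c_M τ < 3 h, consistent initial data with ∂_τ p⁰ = ṗ(0), and that 1 − c_M h − 2 c_{α,M} τ h − 2 c_A τ h⁻¹ > 0. Then for every n ≥ 1: τ Σ_{k=1}^{n} (1 − 4 c_M h − c_{α,M} τ h − c_A τ h⁻¹) ‖∂_τ p^{k+1} − ∂_τ p^{k}‖_{M_Γ}² ≤ ((1 + c_M h − 2 c_{α,M} τ h − 2 c_A τ h⁻¹)/(1 − c_M h − 2 c_{α,M} τ h − 2 c_A τ h⁻¹)) · ( τ² ‖u̇(0)‖_A² + τ² ‖ṗ(0)‖_{A_Γ}² + τ² ‖ṗ(0)‖_{A₂₂}² + τ Σ_{k=0}^{n} ( ‖f_Ω^{k+1} − f_Ω^{k}‖_{M⁻¹}² + ‖f_Γ^{k+1} − f_Γ^{k}‖_{M_Γ⁻¹}² ) ). -/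

import Mathlib

open Matrix Finset

/-- The squared "energy" norm `‖x‖_S² = xᵀ S x` induced by a matrix `S`. -/
noncomputable def vecNormSq {ι : Type*} [Fintype ι] (S : Matrix ι ι ℝ) (x : ι → ℝ) : ℝ :=
  x ⬝ᵥ S.mulVec x

/-!
The equations of two consecutive time steps are subtracted and tested with the increments of the
discrete derivative `(v, d)`. Polarisation of the stiffness form then telescopes, and the lagged
boundary terms are absorbed by the boundary mass form.

By consistency of the initial data the first differenced step lags no boundary terms, so its test
leaves the stiffness terms `2 A(d₀, d₁ - d₀) + A(d₁ - d₀, d₁ - d₀)`. Moving a fraction `θ` of the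
first bulk increment from the test function of the first step to that of the second one keeps some
of the initial dissipation available; a suitable `θ`, depending on the boundary mass constant only,
brings the cost of the initial data down to `(1 + 2 m / (1 - m - 2 x)) A(d₀, d₀)`.
-/

namespace LieSplitting

open LinearMap (BilinForm)

section BilinForm

variable {E : Type*} [AddCommGroup E] [Module ℝ E] {B : BilinForm ℝ E}

theorem two_mul_apply_sub_apply_self (hB : B.IsSymm) (w z : E) :
    2 * B w z - B w w = B z z - B (w - z) (w - z) := by
  simp only [map_sub, LinearMap.sub_apply, hB.eq z w]
  ring

theorem two_mul_apply_sub_add_sub (hB : B.IsSymm) (v v' d d' : E) :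
    2 * B (v' - v + (d' - d)) (v' + d) =
      B (v' + d') (v' + d') - B (v + d) (v + d) + B (v' - v) (v' - v) - B (d' - d) (d' - d) := by
  simp only [map_add, map_sub, LinearMap.add_apply, LinearMap.sub_apply,
    hB.eq v' v, hB.eq d' d, hB.eq d v, hB.eq d v', hB.eq d' v']
  ring

theorem apply_sub_self_le (hB : B.IsPosSemidef) (x y : E) :
    B (x - y) (x - y) ≤ 2 * B x x + 2 * B y y := by
  have h := hB.nonneg (x + y)
  simp only [map_add, map_sub, LinearMap.add_apply, LinearMap.sub_apply] at h ⊢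
  linarith

theorem two_mul_apply_le (hB : B.IsPosSemidef) {c : ℝ} (hc : 0 < c) (x y : E) :
    2 * B x y ≤ c * B x x + c⁻¹ * B y y := by
  have h := mul_nonneg hc.le (hB.nonneg (x - c⁻¹ • y))
  simp only [map_sub, map_smul, LinearMap.sub_apply, LinearMap.smul_apply, smul_eq_mul,
    hB.eq y x] at h
  field_simp at h ⊢
  linarith

theorem apply_sub_smul_add_apply_sub_add_smul_le (hB : B.IsPosSemidef) {θ : ℝ}
    (hθ : 3 * θ ^ 2 < 1) (a b b' : E) :
    B (b - θ • a) (b - θ • a) + B (b' - b + θ • a) (b' - b + θ • a) ≤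
      B a a + 3 / (1 - 3 * θ ^ 2) * B b b + 2 * B b' b' := by
  have hq : 0 < 1 - 3 * θ ^ 2 := by linarith
  have hsq := hB.nonneg (b' + b - θ • a)
  have hyoung := two_mul_apply_le hB hq a (-(3 * θ) • b)
  have hcoeff : 3 / (1 - 3 * θ ^ 2) = 3 + 9 * θ ^ 2 * (1 - 3 * θ ^ 2)⁻¹ := by
    field_simp
    ring
  rw [hcoeff]
  simp only [map_add, map_sub, map_smul, LinearMap.add_apply, LinearMap.sub_apply,
    LinearMap.smul_apply, smul_eq_mul, hB.eq b a, hB.eq b' a, hB.eq b' b] at hsq hyoung ⊢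
  linarith

theorem two_mul_apply_smul_sub_add_two_mul_apply (hB : B.IsSymm) (θ : ℝ)
    (v₀ v₁ v₂ d₀ d₁ d₂ : E) :
    2 * B ((1 - θ) • (v₁ - v₀) + (d₁ - d₀)) v₁
        + 2 * B (v₂ - v₁ + θ • (v₁ - v₀) + (d₂ - d₁)) (v₂ + d₁) =
      B (v₂ + d₂) (v₂ + d₂) - B (v₀ + d₀) (v₀ + d₀)
        + B (v₂ - v₁ + θ • (v₁ - v₀)) (v₂ - v₁ + θ • (v₁ - v₀))
        + ((1 - θ ^ 2) * B (v₁ - v₀) (v₁ - v₀)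
          - 2 * B (v₁ - v₀) ((1 - θ) • d₀ - θ • (d₁ - d₀)))
        - 2 * B d₀ (d₁ - d₀) - B (d₁ - d₀) (d₁ - d₀) - B (d₂ - d₁) (d₂ - d₁) := by
  simp only [map_add, map_sub, map_smul, LinearMap.add_apply, LinearMap.sub_apply,
    LinearMap.smul_apply, smul_eq_mul, hB.eq v₁ v₀, hB.eq v₂ v₀, hB.eq v₂ v₁, hB.eq d₁ d₀,
    hB.eq d₂ d₁, hB.eq d₀ v₀, hB.eq d₀ v₁, hB.eq d₁ v₁, hB.eq d₁ v₂, hB.eq d₂ v₂]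
  ring

theorem le_two_mul_apply_smul_sub_add_two_mul_apply (hB : B.IsPosSemidef) {θ : ℝ}
    (hθ : θ ^ 2 < 1) (v₀ v₁ v₂ d₀ d₁ d₂ : E) :
    B (v₂ + d₂) (v₂ + d₂) - B (v₀ + d₀) (v₀ + d₀) - 2 * B d₀ (d₁ - d₀)
        - B (d₁ - d₀) (d₁ - d₀) - B (d₂ - d₁) (d₂ - d₁)
        - (1 - θ ^ 2)⁻¹ *
          B ((1 - θ) • d₀ - θ • (d₁ - d₀)) ((1 - θ) • d₀ - θ • (d₁ - d₀)) ≤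
      2 * B ((1 - θ) • (v₁ - v₀) + (d₁ - d₀)) v₁
        + 2 * B (v₂ - v₁ + θ • (v₁ - v₀) + (d₂ - d₁)) (v₂ + d₁) := by
  rw [two_mul_apply_smul_sub_add_two_mul_apply hB.isSymm]
  linarith [hB.nonneg (v₂ - v₁ + θ • (v₁ - v₀)),
    two_mul_apply_le hB (sub_pos.2 hθ) (v₁ - v₀) ((1 - θ) • d₀ - θ • (d₁ - d₀))]

theorem inv_le_of_mixing_condition {x β θ W : ℝ} (hx : 0 < x) (hβ : 0 < β) (hθ : -1 < θ)
    (hθ' : θ < 1) (hW : x * (1 - θ) ≤ β * ((1 - θ ^ 2) * W - x)) :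
    β⁻¹ ≤ (1 + θ) * (W / x - (1 - θ ^ 2)⁻¹) := by
  have hsub : 0 < 1 - θ := by linarith
  have hadd : 0 < 1 + θ := by linarith
  have hfactor : 1 - θ ^ 2 = (1 - θ) * (1 + θ) := by ring
  have hquot : (1 + θ) * (W / x - (1 - θ ^ 2)⁻¹) = ((1 - θ ^ 2) * W - x) / (x * (1 - θ)) := by
    rw [hfactor]
    field_simp
  rw [hquot, inv_eq_one_div, div_le_div_iff₀ hβ (by positivity)]
  linarith

/- After multiplication by `1 + θ` the difference of the two sides is
`β B(d, d) - 2 B(d, b) + γ B(b, b)` with `β γ ≥ 1`, where `β = η (1 + θ) + 2 θ`. -/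
theorem initial_terms_le (hB : B.IsPosSemidef) {x η θ W N : ℝ} (hx : 0 < x) (hη : 0 ≤ η)
    (hθ : 0 < θ) (hθ' : θ < 1)
    (hW : x * (1 - θ) ≤ (η * (1 + θ) + 2 * θ) * ((1 - θ ^ 2) * W - x))
    (d b : E) (hb : B b b ≤ x * N) :
    2 * B d b + B b b + (1 - θ ^ 2)⁻¹ * B ((1 - θ) • d - θ • b) ((1 - θ) • d - θ • b) ≤
      (1 + η) * B d d + W * N := by
  have hβ : 0 < η * (1 + θ) + 2 * θ := by positivity
  have hsub : 0 < 1 - θ := by linarith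
  have hfactor : 1 - θ ^ 2 = (1 - θ) * (1 + θ) := by ring
  have hsq : 0 < 1 - θ ^ 2 := hfactor ▸ by positivity
  have hW₀ : 0 < (1 - θ ^ 2) * W - x :=
    pos_of_mul_pos_right (lt_of_lt_of_le (by positivity) hW) hβ.le
  have hWN : W / x * B b b ≤ W * N := by
    have hWpos : 0 < W := pos_of_mul_pos_right (by linarith) hsq.le
    rw [div_mul_eq_mul_div, div_le_iff₀ hx]
    linarith [mul_le_mul_of_nonneg_left hb hWpos.le]
  have hyoung := two_mul_apply_le hB hβ d b
  have hinv := mul_le_mul_of_nonneg_right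
    (inv_le_of_mixing_condition hx hβ (by linarith) hθ' hW) (hB.nonneg b)
  have hquad : (1 + θ) * (2 * B d b + B b b
      + (1 - θ ^ 2)⁻¹ * B ((1 - θ) • d - θ • b) ((1 - θ) • d - θ • b)) =
      (1 + θ) * ((1 + η) * B d d + W / x * B b b) - ((η * (1 + θ) + 2 * θ) * B d d
        - 2 * B d b + (1 + θ) * (W / x - (1 - θ ^ 2)⁻¹) * B b b) := by
    simp only [map_sub, map_smul, LinearMap.sub_apply, LinearMap.smul_apply, smul_eq_mul,
      hB.eq b d]
    rw [hfactor]
    field_simp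
    ring
  have hle : (1 + θ) * (2 * B d b + B b b
      + (1 - θ ^ 2)⁻¹ * B ((1 - θ) • d - θ • b) ((1 - θ) • d - θ • b)) ≤
      (1 + θ) * ((1 + η) * B d d + W / x * B b b) := by linarith
  linarith [le_of_mul_le_mul_left hle (by linarith)]

end BilinForm

theorem exists_mixing_parameter {m x : ℝ} (hm : 0 < m) (hc : 0 < 1 - m - 2 * x)
    (h : 4 * m + x < 1) :
    ∃ θ : ℝ, 0 < θ ∧ θ ≤ 1 / 2 ∧ x * (1 - θ) ≤ (2 * m / (1 - m - 2 * x) * (1 + θ) + 2 * θ) *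
      ((1 - θ ^ 2) * (1 - 3 * m / (1 - 3 * θ ^ 2)) - x) := by
  suffices ∃ θ : ℝ, 0 < θ ∧ θ ≤ 1 / 2 ∧ (1 - m - 2 * x) * (x * (1 - θ)) ≤
      (2 * m * (1 + θ) + (1 - m - 2 * x) * (2 * θ)) *
      ((1 - θ ^ 2) * (1 - 3 * m / (1 - 3 * θ ^ 2)) - x) by
    obtain ⟨θ, hθ, hθ', hle⟩ := this
    refine ⟨θ, hθ, hθ', ?_⟩
    rw [← mul_le_mul_iff_of_pos_left hc]
    refine hle.trans_eq ?_
    generalize (1 - θ ^ 2) * (1 - 3 * m / (1 - 3 * θ ^ 2)) - x = w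
    field_simp
  -- Near `m = 0`, `x = 1 / 2` only `θ` close to `1 / 2` is admissible, but `θ = 1 / 2` fails for
  -- `m ≥ 1 / 12`. For fixed `θ` the claim is a quadratic inequality in `(m, x)`.
  rcases le_total m (1 / 60) with hm₁ | hm₁
  · refine ⟨1 / 2, by norm_num, by norm_num, ?_⟩
    norm_num only
    nlinarith [sq_nonneg (1 - 2 * x - 11 / 2 * m)]
  rcases le_total m (1 / 12) with hm₂ | hm₂
  · refine ⟨1 / 3, by norm_num, by norm_num, ?_⟩
    norm_num only
    nlinarith [mul_nonneg (sub_nonneg.2 hm₁) (sub_nonneg.2 hm₂),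
      sq_nonneg (1 - 2 * x - (1 / 18 + 3 / 2 * m))]
  · refine ⟨1 / 10, by norm_num, by norm_num, ?_⟩
    norm_num only
    nlinarith [mul_nonneg (sub_nonneg.2 hm₂) (sub_nonneg.2 h.le),
      sq_nonneg (1 - m - 2 * x - 1 / 4), sq_nonneg (m - 2 / 13)]

/-- The four forms of a bulk–surface problem with bulk unknowns in `V` and boundary unknowns in
`W`: mass form `M` and stiffness form `A` on `V × W`, boundary mass form `MΓ` and boundary
stiffness form `AΓ` on `W`. The constants `m` and `x` bound `M` and `A` on the boundary unknowns
by `MΓ`. The stiffness forms are thought of as already multiplied by the time step. -/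
structure BulkSurfaceForms (V W : Type*) [AddCommGroup V] [Module ℝ V] [AddCommGroup W]
    [Module ℝ W] (m x : ℝ) where
  M : BilinForm ℝ (V × W)
  A : BilinForm ℝ (V × W)
  MΓ : BilinForm ℝ W
  AΓ : BilinForm ℝ W
  M_isPosSemidef : M.IsPosSemidef
  A_isPosSemidef : A.IsPosSemidef
  MΓ_isPosSemidef : MΓ.IsPosSemidef
  AΓ_isPosSemidef : AΓ.IsPosSemidef
  M_boundary_le : ∀ z, M (0, z) (0, z) ≤ m * MΓ z z
  A_boundary_le : ∀ z, A (0, z) (0, z) ≤ x * MΓ z z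

namespace BulkSurfaceForms

variable {V W : Type*} [AddCommGroup V] [Module ℝ V] [AddCommGroup W] [Module ℝ W] {m x : ℝ}
  (P : BulkSurfaceForms V W m x)

/-- The energy of a bulk–surface pair `(v, d)`, in which the second-difference estimate
telescopes. -/
def energy (v : V) (d : W) : ℝ := P.A (v, d) (v, d) + P.AΓ d d

/-- One step of the differenced Lie splitting scheme, in weak form. The step takes the discrete
derivatives `(v, d)` to `(v', d')`, with lagged boundary data `b` in the mass form and `e` in the
stiffness form. The load enters only through a bound `D` for its squared dual norm: Young's
inequality has been applied to it, with the norms of `M` and `MΓ` on the right-hand side. -/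
def IsLieStep (v v' : V) (b e d d' : W) (D : ℝ) : Prop :=
  ∀ t s, 2 * (P.M (t, s) (v' - v, b) + P.A (t, s) (v', e) + P.MΓ s (d' - d) + P.AΓ s d') ≤
    P.M (t, s) (t, s) + P.MΓ s s + D

variable {P} {v v' : V} {b e d d' : W} {D : ℝ}

theorem energy_nonneg (v : V) (d : W) : 0 ≤ P.energy v d :=
  add_nonneg (P.A_isPosSemidef.nonneg _) (P.AΓ_isPosSemidef.nonneg _)

namespace IsLieStep

theorem nonneg (h : P.IsLieStep v v' b e d d' D) : 0 ≤ D := by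
  simpa [Prod.mk_zero_zero] using h 0 0

theorem apply_le (h : P.IsLieStep v v' b e d d' D) (t : V) :
    P.M (v' - v, b) (v' - v, b) + 2 * P.A (t, d' - d) (v', e) + P.MΓ (d' - d) (d' - d)
        + P.AΓ d' d' ≤
      P.M (t - (v' - v), d' - d - b) (t - (v' - v), d' - d - b) + P.AΓ d d + D := by
  have hM := two_mul_apply_sub_apply_self P.M_isPosSemidef.isSymm (t, d' - d) (v' - v, b)
  have hAΓ := two_mul_apply_sub_apply_self P.AΓ_isPosSemidef.isSymm (d' - d) d'
  have hdiff : d' - d - d' = -d := by abel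
  rw [hdiff, LinearMap.map_neg₂, map_neg, neg_neg] at hAΓ
  rw [Prod.mk_sub_mk] at hM
  linarith [h t (d' - d), P.AΓ_isPosSemidef.nonneg (d' - d)]

theorem energy_add_le (h : P.IsLieStep v v' b d d d' D) :
    P.energy v' d' + (1 - x - 2 * m) * P.MΓ (d' - d) (d' - d) ≤
      P.energy v d + 2 * m * P.MΓ b b + D := by
  have htest := h.apply_le (v' - v)
  have hmass := apply_sub_self_le P.M_isPosSemidef (0, d' - d) (0, b)
  have hstiff := two_mul_apply_sub_add_sub P.A_isPosSemidef.isSymm (v, 0) (v', 0) (0, d) (0, d')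
  simp only [Prod.mk_add_mk, Prod.mk_sub_mk, sub_self, add_zero, zero_add] at hstiff hmass
  rw [sub_self] at htest
  simp only [energy]
  linarith [P.M_isPosSemidef.nonneg (v' - v, b), P.A_isPosSemidef.nonneg (v' - v, 0),
    P.M_boundary_le (d' - d), P.M_boundary_le b, P.A_boundary_le (d' - d)]

theorem energy_add_le_of_initial {v₀ v₁ v₂ : V} {d₀ d₁ d₂ : W} {D₀ D₁ : ℝ}
    (h₀ : P.IsLieStep v₀ v₁ 0 0 d₀ d₁ D₀) (h₁ : P.IsLieStep v₁ v₂ (d₁ - d₀) d₁ d₁ d₂ D₁)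
    (hm : 0 < m) (hx : 0 < x) (hc : 0 < 1 - m - 2 * x) (hmx : 4 * m + x < 1) :
    P.energy v₂ d₂ + (1 - x - 2 * m) * P.MΓ (d₂ - d₁) (d₂ - d₁) ≤
      P.energy v₀ d₀ + (1 + 2 * m / (1 - m - 2 * x)) * P.A (0, d₀) (0, d₀) + D₀ + D₁ := by
  obtain ⟨θ, hθ, hθ', hmix⟩ := exists_mixing_parameter hm hc hmx
  have htest₀ := h₀.apply_le ((1 - θ) • (v₁ - v₀))
  have htest₁ := h₁.apply_le (v₂ - v₁ + θ • (v₁ - v₀))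
  have hmass := apply_sub_smul_add_apply_sub_add_smul_le P.M_isPosSemidef
    (θ := θ) (by nlinarith) (v₁ - v₀, 0) (0, d₁ - d₀) (0, d₂ - d₁)
  have hstiff := le_two_mul_apply_smul_sub_add_two_mul_apply P.A_isPosSemidef
    (θ := θ) (by nlinarith) (v₀, 0) (v₁, 0) (v₂, 0) (0, d₀) (0, d₁) (0, d₂)
  have hinitial := initial_terms_le P.A_isPosSemidef hx (by positivity) hθ (by linarith) hmix
    (0, d₀) (0, d₁ - d₀) (P.A_boundary_le _)
  have hshift₀ : (1 - θ) • (v₁ - v₀) - (v₁ - v₀) = -(θ • (v₁ - v₀)) := by module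
  have hshift₁ : v₂ - v₁ + θ • (v₁ - v₀) - (v₂ - v₁) = θ • (v₁ - v₀) := by abel
  rw [hshift₀, sub_zero] at htest₀
  rw [hshift₁] at htest₁
  simp only [Prod.mk_add_mk, Prod.mk_sub_mk, Prod.smul_mk, smul_zero, sub_self, sub_zero,
    zero_sub, add_zero, zero_add] at hmass hstiff hinitial
  have hcoeff : 0 ≤ 3 / (1 - 3 * θ ^ 2) := div_nonneg (by norm_num) (by nlinarith)
  have hlag := mul_le_mul_of_nonneg_left (P.M_boundary_le (d₁ - d₀)) hcoeff
  have hsplit : 3 * m / (1 - 3 * θ ^ 2) = 3 / (1 - 3 * θ ^ 2) * m := by ring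
  rw [hsplit] at hinitial
  simp only [energy]
  linarith [P.M_isPosSemidef.nonneg (v₂ - v₁, d₁ - d₀), P.M_boundary_le (d₂ - d₁),
    P.A_boundary_le (d₂ - d₁)]

end IsLieStep

/-- A solution of the differenced Lie splitting scheme with consistent initial data: the initial
state satisfies the undifferenced equations, so the first step lags no boundary data. -/
structure IsLieSolution (P : BulkSurfaceForms V W m x) (v : ℕ → V) (d : ℕ → W) (D : ℕ → ℝ) :
    Prop where
  first : P.IsLieStep (v 0) (v 1) 0 0 (d 0) (d 1) (D 0)
  step : ∀ k, P.IsLieStep (v (k + 1)) (v (k + 2)) (d (k + 1) - d k) (d (k + 1)) (d (k + 1))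
    (d (k + 2)) (D (k + 1))

namespace IsLieSolution

variable {v : ℕ → V} {d : ℕ → W} {D : ℕ → ℝ}

theorem sum_add_energy_le (h : P.IsLieSolution v d D) (hm : 0 < m) (hx : 0 < x)
    (hc : 0 < 1 - m - 2 * x) (hmx : 4 * m + x < 1) (n : ℕ) :
    ∑ k ∈ Icc 1 (n + 1), (1 - 4 * m - x) * P.MΓ (d (k + 1) - d k) (d (k + 1) - d k)
        + P.energy (v (n + 2)) (d (n + 2))
        + 2 * m * P.MΓ (d (n + 2) - d (n + 1)) (d (n + 2) - d (n + 1)) ≤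
      P.energy (v 0) (d 0) + (1 + 2 * m / (1 - m - 2 * x)) * P.A (0, d 0) (0, d 0)
        + ∑ k ∈ range (n + 2), D k := by
  induction n with
  | zero =>
    have := h.first.energy_add_le_of_initial (h.step 0) hm hx hc hmx
    simp only [zero_add, Icc_self, sum_singleton, sum_range_succ, sum_range_zero]
    linarith
  | succ n ih =>
    have := (h.step (n + 1)).energy_add_le
    rw [sum_Icc_succ_top (by lia), sum_range_succ]
    linarith

theorem sum_secondDifference_le (h : P.IsLieSolution v d D) (hm : 0 < m) (hx : 0 < x)
    (hc : 0 < 1 - m - 2 * x) {n : ℕ} (hn : 1 ≤ n) :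
    ∑ k ∈ Icc 1 n, (1 - 4 * m - x) * P.MΓ (d (k + 1) - d k) (d (k + 1) - d k) ≤
      (1 + 2 * m / (1 - m - 2 * x)) *
        (P.energy (v 0) (d 0) + P.A (0, d 0) (0, d 0) + ∑ k ∈ range (n + 1), D k) := by
  have hη : 0 ≤ 2 * m / (1 - m - 2 * x) := by positivity
  have hD : 0 ≤ ∑ k ∈ range (n + 1), D k := sum_nonneg fun k _ => by
    cases k with
    | zero => exact h.first.nonneg
    | succ k => exact (h.step k).nonneg
  have henergy := P.energy_nonneg (v 0) (d 0)
  have hA := P.A_isPosSemidef.nonneg (0, d 0)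
  rcases le_or_gt 1 (4 * m + x) with hmx | hmx
  · have hleft : ∑ k ∈ Icc 1 n, (1 - 4 * m - x) * P.MΓ (d (k + 1) - d k) (d (k + 1) - d k) ≤ 0 :=
      sum_nonpos fun k _ =>
        mul_nonpos_of_nonpos_of_nonneg (by linarith) (P.MΓ_isPosSemidef.nonneg _)
    exact hleft.trans (by positivity)
  · obtain ⟨n, rfl⟩ := Nat.exists_eq_add_of_le' hn
    have hsum := h.sum_add_energy_le hm hx hc hmx n
    have hmass := mul_nonneg hm.le (P.MΓ_isPosSemidef.nonneg (d (n + 2) - d (n + 1)))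
    linarith [P.energy_nonneg (v (n + 2)) (d (n + 2)), mul_nonneg hη (add_nonneg henergy hD)]

end IsLieSolution

end BulkSurfaceForms

section Differencing

variable {ι κ : Type*} [Fintype ι] [Fintype κ]

theorem fromBlocks_mulVec_sumElim_add_eq {S₁₁ T₁₁ : Matrix ι ι ℝ} {S₁₂ T₁₂ : Matrix ι κ ℝ}
    {S₂₁ T₂₁ : Matrix κ ι ℝ} {S₂₂ T₂₂ : Matrix κ κ ℝ} {v u f₁ : ι → ℝ} {b p g f₂ fΓ : κ → ℝ}
    (h₁ : S₁₁ *ᵥ v + S₁₂ *ᵥ b + T₁₁ *ᵥ u + T₁₂ *ᵥ p = f₁)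
    (h₂ : S₂₁ *ᵥ v + S₂₂ *ᵥ b + T₂₁ *ᵥ u + T₂₂ *ᵥ p + g = f₂ + fΓ) :
    fromBlocks S₁₁ S₁₂ S₂₁ S₂₂ *ᵥ Sum.elim v b + fromBlocks T₁₁ T₁₂ T₂₁ T₂₂ *ᵥ Sum.elim u p
      + Sum.elim (0 : ι → ℝ) g = Sum.elim f₁ f₂ + Sum.elim (0 : ι → ℝ) fΓ := by
  simp only [fromBlocks_mulVec, Sum.elim_comp_inl, Sum.elim_comp_inr, ← Sum.elim_add_add,
    Sum.elim_eq_iff, add_zero]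
  exact ⟨by rw [← h₁]; abel, by rw [← h₂]; abel⟩

theorem blockEquation_sub {M A : Matrix (ι ⊕ κ) (ι ⊕ κ) ℝ} {MΓ AΓ : Matrix κ κ ℝ} {τ : ℝ}
    {v v' u u' w : ι → ℝ} {b b' p p' e d d' q q' r fΓ fΓ' : κ → ℝ} {f f' : ι ⊕ κ → ℝ}
    (h : M *ᵥ Sum.elim v b + A *ᵥ Sum.elim u p + Sum.elim (0 : ι → ℝ) (MΓ *ᵥ d + AΓ *ᵥ q) =
      f + Sum.elim (0 : ι → ℝ) fΓ)
    (h' : M *ᵥ Sum.elim v' b' + A *ᵥ Sum.elim u' p'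
      + Sum.elim (0 : ι → ℝ) (MΓ *ᵥ d' + AΓ *ᵥ q') = f' + Sum.elim (0 : ι → ℝ) fΓ')
    (hu : u' - u = τ • w) (hp : p' - p = τ • e) (hq : q' - q = τ • r) :
    M *ᵥ Sum.elim (v' - v) (b' - b) + (τ • A) *ᵥ Sum.elim w e
        + Sum.elim (0 : ι → ℝ) (MΓ *ᵥ (d' - d) + (τ • AΓ) *ᵥ r) =
      f' - f + Sum.elim (0 : ι → ℝ) (fΓ' - fΓ) := by
  have hA : (τ • A) *ᵥ Sum.elim w e = A *ᵥ Sum.elim u' p' - A *ᵥ Sum.elim u p := by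
    have hsmul : τ • Sum.elim w e = Sum.elim (τ • w) (τ • e) := by ext (i | i) <;> rfl
    rw [smul_mulVec, ← mulVec_smul, hsmul, ← hu, ← hp, Sum.elim_sub_sub, mulVec_sub]
  have hΓ : MΓ *ᵥ (d' - d) + (τ • AΓ) *ᵥ r = MΓ *ᵥ d' + AΓ *ᵥ q' - (MΓ *ᵥ d + AΓ *ᵥ q) := by
    rw [smul_mulVec, ← mulVec_smul, ← hq, mulVec_sub, mulVec_sub]
    abel
  have hzero (y y' : κ → ℝ) : Sum.elim (0 : ι → ℝ) (y' - y) =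
      Sum.elim (0 : ι → ℝ) y' - Sum.elim (0 : ι → ℝ) y := by
    rw [← Sum.elim_sub_sub, sub_self]
  rw [hA, hΓ, Sum.elim_sub_sub, mulVec_sub, hzero, hzero]
  linear_combination (exp := 1) h' - h

/-- A solution of the Lie splitting scheme in block form, with consistent initial data. Here `u`
and `p` are the bulk and boundary unknowns, `v` and `d` their discrete derivatives, with `v 0` and
`d 0` prescribed; the boundary equation occupies the second block. -/
structure IsSchemeSolution (M A : Matrix (ι ⊕ κ) (ι ⊕ κ) ℝ) (MΓ AΓ : Matrix κ κ ℝ) (τ : ℝ)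
    (u v : ℕ → ι → ℝ) (p d : ℕ → κ → ℝ) (F : ℕ → ι ⊕ κ → ℝ) (FΓ : ℕ → κ → ℝ) : Prop where
  bulk_derivative : ∀ n, u (n + 1) - u n = τ • v (n + 1)
  boundary_derivative : ∀ n, p (n + 1) - p n = τ • d (n + 1)
  consistent : M *ᵥ Sum.elim (v 0) (d 0) + A *ᵥ Sum.elim (u 0) (p 0)
    + Sum.elim (0 : ι → ℝ) (MΓ *ᵥ d 0 + AΓ *ᵥ p 0) = F 0 + Sum.elim (0 : ι → ℝ) (FΓ 0)
  step : ∀ n, M *ᵥ Sum.elim (v (n + 1)) (d n) + A *ᵥ Sum.elim (u (n + 1)) (p n)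
    + Sum.elim (0 : ι → ℝ) (MΓ *ᵥ d (n + 1) + AΓ *ᵥ p (n + 1)) =
    F (n + 1) + Sum.elim (0 : ι → ℝ) (FΓ (n + 1))

namespace IsSchemeSolution

variable {M A : Matrix (ι ⊕ κ) (ι ⊕ κ) ℝ} {MΓ AΓ : Matrix κ κ ℝ} {τ : ℝ}
  {u v : ℕ → ι → ℝ} {p d : ℕ → κ → ℝ} {F : ℕ → ι ⊕ κ → ℝ} {FΓ : ℕ → κ → ℝ}

theorem differenced_first (h : IsSchemeSolution M A MΓ AΓ τ u v p d F FΓ) :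
    M *ᵥ Sum.elim (v 1 - v 0) 0 + (τ • A) *ᵥ Sum.elim (v 1) 0
        + Sum.elim (0 : ι → ℝ) (MΓ *ᵥ (d 1 - d 0) + (τ • AΓ) *ᵥ d 1) =
      F 1 - F 0 + Sum.elim (0 : ι → ℝ) (FΓ 1 - FΓ 0) := by
  simpa only [sub_self] using blockEquation_sub h.consistent (h.step 0) (h.bulk_derivative 0)
    (e := 0) (by rw [sub_self, smul_zero]) (h.boundary_derivative 0)

theorem differenced_step (h : IsSchemeSolution M A MΓ AΓ τ u v p d F FΓ) (n : ℕ) :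
    M *ᵥ Sum.elim (v (n + 2) - v (n + 1)) (d (n + 1) - d n)
        + (τ • A) *ᵥ Sum.elim (v (n + 2)) (d (n + 1))
        + Sum.elim (0 : ι → ℝ) (MΓ *ᵥ (d (n + 2) - d (n + 1)) + (τ • AΓ) *ᵥ d (n + 2)) =
      F (n + 2) - F (n + 1) + Sum.elim (0 : ι → ℝ) (FΓ (n + 2) - FΓ (n + 1)) :=
  blockEquation_sub (h.step n) (h.step (n + 1)) (h.bulk_derivative (n + 1))
    (h.boundary_derivative n) (h.boundary_derivative (n + 1))

end IsSchemeSolution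

end Differencing

section Matrix

variable {ι κ : Type*} [Fintype ι] [Fintype κ]

theorem vecNormSq_smul (c : ℝ) (S : Matrix ι ι ℝ) (y : ι → ℝ) :
    vecNormSq (c • S) y = c * vecNormSq S y := by
  simp [vecNormSq, smul_mulVec]

theorem vecNormSq_fromBlocks_sumElim_zero (S₁₁ : Matrix ι ι ℝ) (S₁₂ : Matrix ι κ ℝ)
    (S₂₁ : Matrix κ ι ℝ) (S₂₂ : Matrix κ κ ℝ) (z : κ → ℝ) :
    vecNormSq (fromBlocks S₁₁ S₁₂ S₂₁ S₂₂) (Sum.elim 0 z) = vecNormSq S₂₂ z := by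
  simp [vecNormSq, fromBlocks_mulVec, sumElim_dotProduct_sumElim]

theorem isPosSemidef_toBilin' [DecidableEq ι] {S : Matrix ι ι ℝ} (hS : S.PosSemidef) :
    (toBilin' S).IsPosSemidef := by
  rw [LinearMap.BilinForm.isPosSemidef_iff,
    LinearMap.isPosSemidef_iff_posSemidef_toMatrix (Pi.basisFun ℝ ι)]
  exact (LinearMap.BilinForm.toMatrix'_toBilin' S).symm ▸ hS

theorem two_mul_dotProduct_le [DecidableEq ι] {S : Matrix ι ι ℝ} (hS : S.PosDef)
    (w f : ι → ℝ) : 2 * (w ⬝ᵥ f) ≤ vecNormSq S w + vecNormSq S⁻¹ f := by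
  have hB := isPosSemidef_toBilin' hS.posSemidef
  have hpolar := two_mul_apply_sub_apply_self hB.isSymm w (S⁻¹ *ᵥ f)
  have hnonneg := hB.nonneg (w - S⁻¹ *ᵥ f)
  have hdet : IsUnit S.det := (isUnit_iff_isUnit_det S).1 hS.isUnit
  have hsolve : S *ᵥ S⁻¹ *ᵥ f = f := by rw [mulVec_mulVec, mul_nonsing_inv S hdet, one_mulVec]
  simp only [toBilin'_apply', hsolve, dotProduct_comm (S⁻¹ *ᵥ f)] at hpolar hnonneg
  simp only [vecNormSq]
  linarith

variable [DecidableEq ι] [DecidableEq κ]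

/-- The bilinear form of a matrix indexed by `ι ⊕ κ`, on pairs of coordinate vectors. -/
def blockForm (S : Matrix (ι ⊕ κ) (ι ⊕ κ) ℝ) : BilinForm ℝ ((ι → ℝ) × (κ → ℝ)) :=
  let e := (LinearEquiv.sumArrowLequivProdArrow ι κ ℝ ℝ).symm.toLinearMap
  (toBilin' S).comp e e

theorem blockForm_apply (S : Matrix (ι ⊕ κ) (ι ⊕ κ) ℝ) (a a' : ι → ℝ) (b b' : κ → ℝ) :
    blockForm S (a, b) (a', b') = Sum.elim a b ⬝ᵥ S *ᵥ Sum.elim a' b' :=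
  toBilin'_apply' S _ _

theorem blockForm_self (S : Matrix (ι ⊕ κ) (ι ⊕ κ) ℝ) (a : ι → ℝ) (b : κ → ℝ) :
    blockForm S (a, b) (a, b) = vecNormSq S (Sum.elim a b) :=
  blockForm_apply S a a b b

theorem toBilin'_self (S : Matrix ι ι ℝ) (a : ι → ℝ) : toBilin' S a a = vecNormSq S a :=
  toBilin'_apply' S a a

theorem isPosSemidef_blockForm {S : Matrix (ι ⊕ κ) (ι ⊕ κ) ℝ} (hS : S.PosSemidef) :
    (blockForm S).IsPosSemidef where
  eq _ _ := (isPosSemidef_toBilin' hS).eq _ _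
  nonneg _ := (isPosSemidef_toBilin' hS).nonneg _

/-- The bulk–surface forms of a system of matrices. -/
def BulkSurfaceForms.ofMatrix {M A : Matrix (ι ⊕ κ) (ι ⊕ κ) ℝ} {MΓ AΓ : Matrix κ κ ℝ} {m x : ℝ}
    (hM : M.PosSemidef) (hA : A.PosSemidef) (hMΓ : MΓ.PosSemidef) (hAΓ : AΓ.PosSemidef)
    (hm : ∀ z, vecNormSq M (Sum.elim 0 z) ≤ m * vecNormSq MΓ z)
    (hx : ∀ z, vecNormSq A (Sum.elim 0 z) ≤ x * vecNormSq MΓ z) :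
    BulkSurfaceForms (ι → ℝ) (κ → ℝ) m x where
  M := blockForm M
  A := blockForm A
  MΓ := toBilin' MΓ
  AΓ := toBilin' AΓ
  M_isPosSemidef := isPosSemidef_blockForm hM
  A_isPosSemidef := isPosSemidef_blockForm hA
  MΓ_isPosSemidef := isPosSemidef_toBilin' hMΓ
  AΓ_isPosSemidef := isPosSemidef_toBilin' hAΓ
  M_boundary_le z := by simpa only [blockForm_self, toBilin'_self] using hm z
  A_boundary_le z := by simpa only [blockForm_self, toBilin'_self] using hx z

theorem BulkSurfaceForms.isLieStep_ofMatrix {M A : Matrix (ι ⊕ κ) (ι ⊕ κ) ℝ}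
    {MΓ AΓ : Matrix κ κ ℝ} {m x : ℝ} (hM : M.PosDef) (hA : A.PosSemidef) (hMΓ : MΓ.PosDef)
    (hAΓ : AΓ.PosSemidef) (hm : ∀ z, vecNormSq M (Sum.elim 0 z) ≤ m * vecNormSq MΓ z)
    (hx : ∀ z, vecNormSq A (Sum.elim 0 z) ≤ x * vecNormSq MΓ z)
    {v v' : ι → ℝ} {b e d d' FΓ : κ → ℝ} {F : ι ⊕ κ → ℝ}
    (h : M *ᵥ Sum.elim (v' - v) b + A *ᵥ Sum.elim v' e
      + Sum.elim (0 : ι → ℝ) (MΓ *ᵥ (d' - d) + AΓ *ᵥ d') = F + Sum.elim (0 : ι → ℝ) FΓ) :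
    (ofMatrix hM.posSemidef hA hMΓ.posSemidef hAΓ hm hx).IsLieStep v v' b e d d'
      (vecNormSq M⁻¹ F + vecNormSq MΓ⁻¹ FΓ) := by
  intro t s
  have htest := congrArg (Sum.elim t s ⬝ᵥ ·) h
  simp only [dotProduct_add, sumElim_dotProduct_sumElim, dotProduct_zero, zero_add] at htest
  simp only [ofMatrix, blockForm_self, toBilin'_self, blockForm_apply]
  simp only [toBilin'_apply']
  linarith [two_mul_dotProduct_le hM (Sum.elim t s) F, two_mul_dotProduct_le hMΓ s FΓ]

variable {M A : Matrix (ι ⊕ κ) (ι ⊕ κ) ℝ} {MΓ AΓ : Matrix κ κ ℝ} {τ m x : ℝ}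
  {u v : ℕ → ι → ℝ} {p d : ℕ → κ → ℝ} {F : ℕ → ι ⊕ κ → ℝ} {FΓ : ℕ → κ → ℝ}

theorem IsSchemeSolution.isLieSolution (h : IsSchemeSolution M A MΓ AΓ τ u v p d F FΓ) (hτ : 0 < τ)
    (hM : M.PosDef) (hA : A.PosSemidef) (hMΓ : MΓ.PosDef) (hAΓ : AΓ.PosSemidef)
    (hm : ∀ z, vecNormSq M (Sum.elim 0 z) ≤ m * vecNormSq MΓ z)
    (hx : ∀ z, vecNormSq (τ • A) (Sum.elim 0 z) ≤ x * vecNormSq MΓ z) :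
    (BulkSurfaceForms.ofMatrix hM.posSemidef (hA.smul hτ.le) hMΓ.posSemidef (hAΓ.smul hτ.le)
      hm hx).IsLieSolution v d fun n => vecNormSq M⁻¹ (F (n + 1) - F n)
        + vecNormSq MΓ⁻¹ (FΓ (n + 1) - FΓ n) where
  first := BulkSurfaceForms.isLieStep_ofMatrix hM _ hMΓ _ hm hx h.differenced_first
  step n := BulkSurfaceForms.isLieStep_ofMatrix hM _ hMΓ _ hm hx (h.differenced_step n)

theorem IsSchemeSolution.sum_secondDifference_le
    (h : IsSchemeSolution M A MΓ AΓ τ u v p d F FΓ) (hτ : 0 < τ)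
    (hM : M.PosDef) (hA : A.PosSemidef) (hMΓ : MΓ.PosDef) (hAΓ : AΓ.PosSemidef)
    (hm : ∀ z, vecNormSq M (Sum.elim 0 z) ≤ m * vecNormSq MΓ z)
    (hx : ∀ z, vecNormSq (τ • A) (Sum.elim 0 z) ≤ x * vecNormSq MΓ z)
    (hm₀ : 0 < m) (hx₀ : 0 < x) (hc : 0 < 1 - m - 2 * x) {n : ℕ} (hn : 1 ≤ n) :
    τ * ∑ k ∈ Icc 1 n, (1 - 4 * m - x) * vecNormSq MΓ (d (k + 1) - d k) ≤
      (1 + 2 * m / (1 - m - 2 * x)) *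
        (τ ^ 2 * vecNormSq A (Sum.elim (v 0) (d 0)) + τ ^ 2 * vecNormSq AΓ (d 0)
          + τ ^ 2 * vecNormSq A (Sum.elim 0 (d 0))
          + τ * ∑ k ∈ range (n + 1), (vecNormSq M⁻¹ (F (k + 1) - F k)
            + vecNormSq MΓ⁻¹ (FΓ (k + 1) - FΓ k))) := by
  have hsum := (h.isLieSolution hτ hM hA hMΓ hAΓ hm hx).sum_secondDifference_le hm₀ hx₀ hc hn
  simp only [BulkSurfaceForms.energy, BulkSurfaceForms.ofMatrix, blockForm_self, toBilin'_self,
    vecNormSq_smul] at hsum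
  refine (mul_le_mul_of_nonneg_left hsum hτ.le).trans_eq ?_
  ring

end Matrix

section Rows

variable {ι κ : Type*} [Fintype ι] [Fintype κ] {M₁₁ A₁₁ : Matrix ι ι ℝ} {M₁₂ A₁₂ : Matrix ι κ ℝ}
  {M₂₁ A₂₁ : Matrix κ ι ℝ} {M₂₂ A₂₂ MΓ AΓ : Matrix κ κ ℝ} {τ : ℝ} {u f₁ : ℕ → ι → ℝ}
  {p d f₂ fΓ : ℕ → κ → ℝ} {w : ι → ℝ}

/-- The discrete derivative `∂_τ u` of a sequence, with prescribed initial value `w`. -/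
noncomputable def discreteDerivative {E : Type*} [AddCommGroup E] [Module ℝ E] (τ : ℝ) (w : E)
    (u : ℕ → E) : ℕ → E
  | 0 => w
  | n + 1 => τ⁻¹ • (u (n + 1) - u n)

theorem isSchemeSolution_fromBlocks (hτ : τ ≠ 0)
    (hd : ∀ n, d (n + 1) = τ⁻¹ • (p (n + 1) - p n))
    (hbulk : ∀ n, M₁₁ *ᵥ (τ⁻¹ • (u (n + 1) - u n)) + A₁₁ *ᵥ u (n + 1) =
      f₁ (n + 1) - M₁₂ *ᵥ d n - A₁₂ *ᵥ p n)
    (hboundary : ∀ n, MΓ *ᵥ d (n + 1) + AΓ *ᵥ p (n + 1) =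
      fΓ (n + 1) + f₂ (n + 1) - M₂₂ *ᵥ d n - A₂₂ *ᵥ p n - M₂₁ *ᵥ (τ⁻¹ • (u (n + 1) - u n))
        - A₂₁ *ᵥ u (n + 1))
    (hbulk₀ : M₁₁ *ᵥ w + M₁₂ *ᵥ d 0 + A₁₁ *ᵥ u 0 + A₁₂ *ᵥ p 0 = f₁ 0)
    (hboundary₀ : M₂₁ *ᵥ w + (M₂₂ + MΓ) *ᵥ d 0 + A₂₁ *ᵥ u 0 + (A₂₂ + AΓ) *ᵥ p 0 = f₂ 0 + fΓ 0) :
    IsSchemeSolution (fromBlocks M₁₁ M₁₂ M₂₁ M₂₂) (fromBlocks A₁₁ A₁₂ A₂₁ A₂₂) MΓ AΓ τ u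
      (discreteDerivative τ w u) p d (fun n => Sum.elim (f₁ n) (f₂ n)) fΓ where
  bulk_derivative n := (smul_inv_smul₀ hτ _).symm
  boundary_derivative n := by rw [hd, smul_inv_smul₀ hτ]
  consistent := fromBlocks_mulVec_sumElim_add_eq (v := w) hbulk₀ <| by
    rw [← hboundary₀, add_mulVec, add_mulVec]
    abel
  step n := fromBlocks_mulVec_sumElim_add_eq
    (v := τ⁻¹ • (u (n + 1) - u n)) (by linear_combination (exp := 1) hbulk n)
    (by linear_combination (exp := 1) hboundary n)

end Rows

end LieSplitting

open LieSplitting in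
theorem lie_splitting_second_difference_general {ι κ : Type*} [Fintype ι] [Fintype κ]
    [DecidableEq ι] [DecidableEq κ]
    {M₁₁ A₁₁ : Matrix ι ι ℝ} {M₁₂ A₁₂ : Matrix ι κ ℝ} {M₂₁ A₂₁ : Matrix κ ι ℝ}
    {M₂₂ A₂₂ MΓ AΓ : Matrix κ κ ℝ}
    (hM : (Matrix.fromBlocks M₁₁ M₁₂ M₂₁ M₂₂).PosDef)
    (hA : (Matrix.fromBlocks A₁₁ A₁₂ A₂₁ A₂₂).PosSemidef)
    (hMΓ : MΓ.PosDef) (hAΓ : AΓ.PosSemidef)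
    {τ h cM cinv αΩ : ℝ}
    (hτ : 0 < τ) (hh : 0 < h) (hcM : 0 < cM) (hcinv : 0 < cinv) (hαΩ : 0 ≤ αΩ)
    (hmass : ∀ z : κ → ℝ, vecNormSq M₂₂ z ≤ cM * h * vecNormSq MΓ z)
    (hinv : ∀ z : κ → ℝ, vecNormSq A₂₂ z ≤ (αΩ + cinv / h ^ 2) * vecNormSq M₂₂ z)
    (hden : 0 < 1 - cM * h - 2 * (cM * αΩ) * τ * h - 2 * (cM * cinv) * τ / h)
    {u₁ f₁ : ℕ → ι → ℝ} {p dtp f₂ fΓ : ℕ → κ → ℝ}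
    (hdtp : ∀ n : ℕ, dtp (n + 1) = τ⁻¹ • (p (n + 1) - p n))
    (hscheme₁ : ∀ n : ℕ,
      M₁₁.mulVec (τ⁻¹ • (u₁ (n + 1) - u₁ n)) + A₁₁.mulVec (u₁ (n + 1)) =
        f₁ (n + 1) - M₁₂.mulVec (dtp n) - A₁₂.mulVec (p n))
    (hscheme₂ : ∀ n : ℕ,
      MΓ.mulVec (dtp (n + 1)) + AΓ.mulVec (p (n + 1)) =
        fΓ (n + 1) + f₂ (n + 1) - M₂₂.mulVec (dtp n) - A₂₂.mulVec (p n)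
          - M₂₁.mulVec (τ⁻¹ • (u₁ (n + 1) - u₁ n)) - A₂₁.mulVec (u₁ (n + 1)))
    {du₁0 : ι → ℝ} {dp0 : κ → ℝ}
    (hcons₁ : M₁₁.mulVec du₁0 + M₁₂.mulVec dp0 + A₁₁.mulVec (u₁ 0) + A₁₂.mulVec (p 0) = f₁ 0)
    (hcons₂ : M₂₁.mulVec du₁0 + (M₂₂ + MΓ).mulVec dp0 + A₂₁.mulVec (u₁ 0)
        + (A₂₂ + AΓ).mulVec (p 0) = f₂ 0 + fΓ 0)
    (hinit : dtp 0 = dp0) {n : ℕ} (hn : 1 ≤ n) :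
      τ * ∑ k ∈ Finset.Icc 1 n,
          (1 - 4 * cM * h - (cM * αΩ) * τ * h - (cM * cinv) * τ / h)
            * vecNormSq MΓ (dtp (k + 1) - dtp k)
      ≤ ((1 + cM * h - 2 * (cM * αΩ) * τ * h - 2 * (cM * cinv) * τ / h)
            / (1 - cM * h - 2 * (cM * αΩ) * τ * h - 2 * (cM * cinv) * τ / h))
          * (τ ^ 2 * vecNormSq (Matrix.fromBlocks A₁₁ A₁₂ A₂₁ A₂₂) (Sum.elim du₁0 dp0)
            + τ ^ 2 * vecNormSq AΓ dp0
            + τ ^ 2 * vecNormSq A₂₂ dp0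
            + τ * ∑ k ∈ Finset.range (n + 1),
                (vecNormSq (Matrix.fromBlocks M₁₁ M₁₂ M₂₁ M₂₂)⁻¹
                    (Sum.elim (f₁ (k + 1)) (f₂ (k + 1)) - Sum.elim (f₁ k) (f₂ k))
                  + vecNormSq MΓ⁻¹ (fΓ (k + 1) - fΓ k))) := by
  subst hinit
  have hstiff z : vecNormSq (τ • fromBlocks A₁₁ A₁₂ A₂₁ A₂₂) (Sum.elim 0 z) ≤
      (cM * αΩ * τ * h + cM * cinv * τ / h) * vecNormSq MΓ z := by
    have hle := (hinv z).trans (mul_le_mul_of_nonneg_left (hmass z) (by positivity))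
    rw [vecNormSq_smul, vecNormSq_fromBlocks_sumElim_zero]
    refine (mul_le_mul_of_nonneg_left hle hτ.le).trans_eq ?_
    field_simp
  have hc : 0 < 1 - cM * h - 2 * (cM * αΩ * τ * h + cM * cinv * τ / h) := by
    linear_combination hden
  have hmain := (isSchemeSolution_fromBlocks hτ.ne' hdtp hscheme₁ hscheme₂ hcons₁ hcons₂
    ).sum_secondDifference_le hτ hM hA hMΓ hAΓ
      (by simpa only [vecNormSq_fromBlocks_sumElim_zero] using hmass) hstiff
      (by positivity) (by positivity) hc hn
  rw [one_add_div hc.ne', vecNormSq_fromBlocks_sumElim_zero] at hmain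
  convert hmain using 2
  · exact sum_congr rfl fun _ _ => by ring
  · congr 1 <;> ring
  · rfl

/-- **Second-difference estimate for the Lie splitting (inequality (4.9) in the proof of
Theorem 4.4).** Under the weak CFL condition, consistent initial data with `∂_τ p⁰ = ṗ(0)`,
and positivity of `1 − c_M h − 2 c_{α,M} τ h − 2 c_A τ h⁻¹`, the differences of consecutive
discrete derivatives of `p` are estimated. -/
theorem lie_splitting_second_difference
    (N₁ N₂ : ℕ) (hN₁ : 0 < N₁) (hN₂ : 0 < N₂)
    (M₁₁ A₁₁ : Matrix (Fin N₁) (Fin N₁) ℝ)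
    (M₁₂ A₁₂ : Matrix (Fin N₁) (Fin N₂) ℝ)
    (M₂₁ A₂₁ : Matrix (Fin N₂) (Fin N₁) ℝ)
    (M₂₂ A₂₂ MΓ AΓ : Matrix (Fin N₂) (Fin N₂) ℝ)
    (hM : (Matrix.fromBlocks M₁₁ M₁₂ M₂₁ M₂₂).PosDef)
    (hA : (Matrix.fromBlocks A₁₁ A₁₂ A₂₁ A₂₂).PosSemidef)
    (hM21 : M₂₁ = M₁₂ᵀ) (hA21 : A₂₁ = A₁₂ᵀ)
    (hMΓ : MΓ.PosDef) (hAΓ : AΓ.PosSemidef)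
    -- constants
    (τ h cM cinv αΩ : ℝ)
    (hτ : 0 < τ) (hh : 0 < h) (hcM : 0 < cM) (hcinv : 0 < cinv) (hαΩ : 0 ≤ αΩ)
    -- boundary mass estimate
    (hmass : ∀ z : Fin N₂ → ℝ, vecNormSq M₂₂ z ≤ cM * h * vecNormSq MΓ z)
    -- inverse estimate
    (hinv : ∀ z : Fin N₂ → ℝ, vecNormSq A₂₂ z ≤ (αΩ + cinv / h ^ 2) * vecNormSq M₂₂ z)
    -- weak CFL condition
    (hCFL : 7 * cinv * cM * τ < 3 * h)
    -- positivity of the denominator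
    (hden : 0 < 1 - cM * h - 2 * (cM * αΩ) * τ * h - 2 * (cM * cinv) * τ / h)
    -- the discrete sequences and data
    (u₁ f₁ : ℕ → Fin N₁ → ℝ) (p dtp f₂ fΓ : ℕ → Fin N₂ → ℝ)
    (hdtp : ∀ n : ℕ, dtp (n + 1) = τ⁻¹ • (p (n + 1) - p n))
    (hscheme₁ : ∀ n : ℕ,
      M₁₁.mulVec (τ⁻¹ • (u₁ (n + 1) - u₁ n)) + A₁₁.mulVec (u₁ (n + 1)) =
        f₁ (n + 1) - M₁₂.mulVec (dtp n) - A₁₂.mulVec (p n))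
    (hscheme₂ : ∀ n : ℕ,
      MΓ.mulVec (dtp (n + 1)) + AΓ.mulVec (p (n + 1)) =
        fΓ (n + 1) + f₂ (n + 1) - M₂₂.mulVec (dtp n) - A₂₂.mulVec (p n)
          - M₂₁.mulVec (τ⁻¹ • (u₁ (n + 1) - u₁ n)) - A₂₁.mulVec (u₁ (n + 1)))
    -- consistent initial data: u̇₁(0) and ṗ(0)
    (du₁0 : Fin N₁ → ℝ) (dp0 : Fin N₂ → ℝ)
    (hcons₁ : M₁₁.mulVec du₁0 + M₁₂.mulVec dp0 + A₁₁.mulVec (u₁ 0) + A₁₂.mulVec (p 0) = f₁ 0)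
    (hcons₂ : M₂₁.mulVec du₁0 + (M₂₂ + MΓ).mulVec dp0 + A₂₁.mulVec (u₁ 0)
        + (A₂₂ + AΓ).mulVec (p 0) = f₂ 0 + fΓ 0)
    -- ∂_τ p⁰ = ṗ(0)
    (hinit : dtp 0 = dp0) :
    ∀ n : ℕ, 1 ≤ n →
      τ * ∑ k ∈ Finset.Icc 1 n,
          (1 - 4 * cM * h - (cM * αΩ) * τ * h - (cM * cinv) * τ / h)
            * vecNormSq MΓ (dtp (k + 1) - dtp k)
      ≤ ((1 + cM * h - 2 * (cM * αΩ) * τ * h - 2 * (cM * cinv) * τ / h)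
            / (1 - cM * h - 2 * (cM * αΩ) * τ * h - 2 * (cM * cinv) * τ / h))
          * (τ ^ 2 * vecNormSq (Matrix.fromBlocks A₁₁ A₁₂ A₂₁ A₂₂) (Sum.elim du₁0 dp0)
            + τ ^ 2 * vecNormSq AΓ dp0
            + τ ^ 2 * vecNormSq A₂₂ dp0
            + τ * ∑ k ∈ Finset.range (n + 1),
                (vecNormSq (Matrix.fromBlocks M₁₁ M₁₂ M₂₁ M₂₂)⁻¹
                    (Sum.elim (f₁ (k + 1)) (f₂ (k + 1)) - Sum.elim (f₁ k) (f₂ k))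
                  + vecNormSq MΓ⁻¹ (fΓ (k + 1) - fΓ k))) := by
  intro n hn
  exact lie_splitting_second_difference_general hM hA hMΓ hAΓ hτ hh hcM hcinv hαΩ hmass hinv hden
    hdtp hscheme₁ hscheme₂ hcons₁ hcons₂ hinit hn
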